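/- Let y : [0,∞) → [0,∞) be continuously differentiable and nonincreasing with y(0) ≤ Y₀, and suppose there is c > 0 such that for every real ℓ ≥ 1 and every t ≥ 0: y'(t) ≤ −c ℓ^{−3/2} y(t)^{1 + 3/ℓ}. Then there exists a constant C ≥ 1, depending only on c and Y₀, such that y(t) ≤ C exp(−t^{2/5}/C) for all t ≥ 0. -/

import Mathlib

/-!
For fixed `ℓ`, the inequality `y' ≤ -c ℓ^{-3/2} y^{1+3/ℓ}` says that `y^{-3/ℓ}` grows at least
linearly, with slope `3 c ℓ^{-5/2}`, as long as `y` is positive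
(`rpow_lower_bound_of_diff_ineq`). Taking `ℓ = (3 c t / e)^{2/5}` makes the resulting lower bound
`y(t)^{-3/ℓ} ≥ 3 c ℓ^{-5/2} t` equal to `e`, that is, `y(t) ≤ e^{-ℓ/3}`, which is the stretched
exponential. When this choice has `ℓ < 1`, the time `t` is bounded in terms of `c`, and the bound
`y(t) ≤ Y₀` suffices after enlarging the constant.
-/

/-- Integrated form of the differential inequality for a single exponent `ℓ`. Monotonicity of `y`
propagates positivity at time `t` to all of `[0, t]`, so that negative powers of `y` are
differentiable there. -/
lemma rpow_lower_bound_of_diff_ineq {c ℓ t : ℝ} {y : ℝ → ℝ} (hℓ : 0 < ℓ) (ht : 0 ≤ t)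
    (hy : DifferentiableOn ℝ y (Set.Ici 0)) (hanti : AntitoneOn y (Set.Ici 0)) (hpos : 0 < y t)
    (hd : ∀ s : ℝ, 0 ≤ s →
      derivWithin y (Set.Ici 0) s ≤ -c * ℓ ^ (-(3 : ℝ) / 2) * y s ^ (1 + 3 / ℓ)) :
    3 * c * ℓ ^ (-(5 : ℝ) / 2) * t ≤ y t ^ (-(3 / ℓ)) := by
  have hypos : ∀ s ∈ Set.Icc 0 t, 0 < y s := fun s hs =>
    hpos.trans_le (hanti hs.1 ht hs.2)
  have hsub : Set.Icc 0 t ⊆ Set.Ici 0 := fun s hs => hs.1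
  have hderiv : ∀ s ∈ Set.Ioo 0 t,
      HasDerivAt (fun s => y s ^ (-(3 / ℓ)) - 3 * c * ℓ ^ (-(5 : ℝ) / 2) * s)
        (derivWithin y (Set.Ici 0) s * (-(3 / ℓ)) * y s ^ (-(3 / ℓ) - 1)
          - 3 * c * ℓ ^ (-(5 : ℝ) / 2) * 1) s := by
    intro s hs
    have h1 : HasDerivAt y (derivWithin y (Set.Ici 0) s) s :=
      (hy s hs.1.le).hasDerivWithinAt.hasDerivAt (Ici_mem_nhds hs.1)
    exact (h1.rpow_const (Or.inl (hypos s ⟨hs.1.le, hs.2.le⟩).ne')).sub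
      ((hasDerivAt_id s).const_mul _)
  have hmono : MonotoneOn (fun s => y s ^ (-(3 / ℓ)) - 3 * c * ℓ ^ (-(5 : ℝ) / 2) * s)
      (Set.Icc 0 t) := by
    refine monotoneOn_of_deriv_nonneg (convex_Icc 0 t) ?_ ?_ ?_
    · refine ContinuousOn.sub ?_ (by fun_prop)
      exact (hy.continuousOn.mono hsub).rpow_const fun s hs => Or.inl (hypos s hs).ne'
    · rw [interior_Icc]
      exact fun s hs => (hderiv s hs).differentiableAt.differentiableWithinAt
    · rw [interior_Icc]
      intro s hs
      rw [(hderiv s hs).deriv]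
      have hys := hypos s ⟨hs.1.le, hs.2.le⟩
      have hw : 0 ≤ 3 / ℓ * y s ^ (-(3 / ℓ) - 1) := by positivity
      have hmul := mul_le_mul_of_nonneg_right (hd s hs.1.le) hw
      have e1 : y s ^ (1 + 3 / ℓ) * y s ^ (-(3 / ℓ) - 1) = 1 := by
        rw [← Real.rpow_add hys]
        ring_nf
        exact Real.rpow_zero _
      have e2 : ℓ ^ (-(5 : ℝ) / 2) = ℓ ^ (-(3 : ℝ) / 2) / ℓ := by
        rw [← Real.rpow_sub_one hℓ.ne']
        norm_num
      have e3 : -c * ℓ ^ (-(3 : ℝ) / 2) * y s ^ (1 + 3 / ℓ) * (3 / ℓ * y s ^ (-(3 / ℓ) - 1))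
          = -(3 * c * ℓ ^ (-(5 : ℝ) / 2)) := by
        rw [e2]
        linear_combination (-c * ℓ ^ (-(3 : ℝ) / 2) * (3 / ℓ)) * e1
      rw [e3] at hmul
      linarith
  have h := hmono ⟨le_rfl, ht⟩ ⟨ht, le_rfl⟩ ht
  have h0 : 0 ≤ y 0 ^ (-(3 / ℓ)) := (Real.rpow_pos_of_pos (hypos 0 ⟨le_rfl, ht⟩) _).le
  simp only [mul_zero, sub_zero] at h
  linarith

/-- **Stretched exponential decay from a family of differential inequalities:**
if `y : [0,∞) → [0,∞)` is `C¹` and nonincreasing with `y(0) ≤ Y₀` and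
`y'(t) ≤ -c ℓ^{-3/2} y(t)^{1+3/ℓ}` for all `ℓ ≥ 1` and `t ≥ 0`, then
`y(t) ≤ C exp(-t^{2/5}/C)` for some `C ≥ 1` depending only on `c` and `Y₀`. -/
theorem stretched_exponential_decay (c Y₀ : ℝ) (hc : 0 < c) (hY₀ : 0 ≤ Y₀) :
    ∃ C : ℝ, 1 ≤ C ∧ ∀ y : ℝ → ℝ,
      ContDiffOn ℝ 1 y (Set.Ici 0) →
      (∀ t : ℝ, 0 ≤ t → 0 ≤ y t) →
      AntitoneOn y (Set.Ici 0) →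
      y 0 ≤ Y₀ →
      (∀ ℓ t : ℝ, 1 ≤ ℓ → 0 ≤ t →
        derivWithin y (Set.Ici 0) t ≤ -c * ℓ ^ (-(3 : ℝ) / 2) * y t ^ (1 + 3 / ℓ)) →
      ∀ t : ℝ, 0 ≤ t → y t ≤ C * Real.exp (-t ^ ((2 : ℝ) / 5) / C) := by
  set b : ℝ := 3 * c / Real.exp 1 with hb
  have hbpos : 0 < b := by positivity
  set a : ℝ := b ^ ((2 : ℝ) / 5) with ha
  have hapos : 0 < a := Real.rpow_pos_of_pos hbpos _
  -- `3 / a` makes `t ^ (2/5) / C ≤ ℓ / 3` for the optimal `ℓ = a * t ^ (2/5)`, and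
  -- `Real.exp 1 * Y₀` absorbs the loss on the initial time interval where `ℓ < 1`.
  have h3a : 0 < 3 / a := by positivity
  have heY : 0 ≤ Real.exp 1 * Y₀ := by positivity
  refine ⟨1 + 3 / a + Real.exp 1 * Y₀, by linarith, ?_⟩
  set C : ℝ := 1 + 3 / a + Real.exp 1 * Y₀ with hC
  have hC1 : 1 ≤ C := by linarith
  intro y hy hnn hanti h0 hd t ht
  set ℓ : ℝ := a * t ^ ((2 : ℝ) / 5) with hℓ
  have htp : 0 ≤ t ^ ((2 : ℝ) / 5) := Real.rpow_nonneg ht _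
  have hexp : -(ℓ / 3) ≤ -t ^ ((2 : ℝ) / 5) / C := by
    have : t ^ ((2 : ℝ) / 5) / C ≤ t ^ ((2 : ℝ) / 5) / (3 / a) :=
      div_le_div_of_nonneg_left htp h3a (by linarith)
    have e : t ^ ((2 : ℝ) / 5) / (3 / a) = ℓ / 3 := by rw [hℓ]; field_simp
    rw [neg_div]
    linarith
  have hexp' := Real.exp_le_exp.mpr hexp
  rcases lt_or_ge ℓ 1 with hlt | hge
  · have h1 : y t ≤ Y₀ := (hanti Set.self_mem_Ici ht ht).trans h0
    have h2 : Real.exp (-1) ≤ Real.exp (-t ^ ((2 : ℝ) / 5) / C) :=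
      (Real.exp_le_exp.mpr (by linarith)).trans hexp'
    calc y t ≤ Y₀ := h1
      _ = Real.exp 1 * Y₀ * Real.exp (-1) := by
        rw [Real.exp_neg]; field_simp
      _ ≤ C * Real.exp (-t ^ ((2 : ℝ) / 5) / C) :=
        mul_le_mul (by linarith) h2 (Real.exp_pos _).le (by linarith)
  · have hfin : y t ≤ Real.exp (-(ℓ / 3)) := by
      rcases (hnn t ht).eq_or_lt with hz | hpos
      · rw [← hz]; exact (Real.exp_pos _).le
      have hℓpos : 0 < ℓ := by linarith
      have htpos : 0 < t := by
        rcases ht.eq_or_lt with h | h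
        · rw [hℓ, ← h, Real.zero_rpow (by norm_num)] at hge
          norm_num at hge
        · exact h
      have key := rpow_lower_bound_of_diff_ineq hℓpos ht (hy.differentiableOn one_ne_zero)
        hanti hpos (fun s hs => hd ℓ s hge hs)
      have hℓ' : ℓ ^ (-(5 : ℝ) / 2) = (b * t)⁻¹ := by
        rw [hℓ, ha, ← Real.mul_rpow hbpos.le ht, ← Real.rpow_mul (by positivity)]
        norm_num [Real.rpow_neg_one]
      have hk : 3 * c * ℓ ^ (-(5 : ℝ) / 2) * t = Real.exp 1 := by
        rw [hℓ', hb]; field_simp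
      rw [hk, Real.rpow_def_of_pos hpos, Real.exp_le_exp] at key
      have hlog : Real.log (y t) ≤ -(ℓ / 3) := by
        have h := mul_le_mul_of_nonneg_right key (by positivity : 0 ≤ ℓ / 3)
        have e : Real.log (y t) * -(3 / ℓ) * (ℓ / 3) = -Real.log (y t) := by field_simp
        rw [e] at h
        linarith
      exact (Real.log_le_iff_le_exp hpos).mp hlog
    calc y t ≤ Real.exp (-t ^ ((2 : ℝ) / 5) / C) := hfin.trans hexp'
      _ ≤ C * Real.exp (-t ^ ((2 : ℝ) / 5) / C) :=
        le_mul_of_one_le_left (Real.exp_pos _).le hC1
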